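/- arXiv:1410.1669 — 2 statements merged into one kernel-verified Lean document; each statement's English description precedes it below -/
import Mathlib

section
/- For any finite simple graph G of order n with minimum degree δ > 0, if r̃ := ⌊s/δ⌋ + 1 satisfies r̃ ≤ τ, then with θ̃ = δ·r̃ − s, ρ̃ = 1/θ̃ and B̃_{s−1} = C(δ·r̃, s−1), the total ⟨r,s⟩-domination number satisfies γᵗ⟨r,s⟩(G) ≤ (1 − (r̃·ρ̃)^{ρ̃} / ((1+ρ̃)^{1+ρ̃} · B̃_{s−1}^{ρ̃})) · r̃·n. -/
open Finset Real

/-- The total ⟨r,s⟩-domination number: the smallest weight of a total s-dominating r-function. -/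
noncomputable def totalRsDomNum {V : Type*} [Fintype V] [DecidableEq V]
    (G : SimpleGraph V) [DecidableRel G.Adj] (rf sf : V → ℕ) : ℕ :=
  sInf {w : ℕ | ∃ f : V → ℕ, (∀ v, f v ≤ rf v) ∧
    (∀ v, sf v ≤ ∑ u ∈ G.neighborFinset v, f u) ∧ w = ∑ v, f v}

/-!
Take `r` copies of every vertex and, for each vertex `v`, fix a set `A v` of `δ * r` copies of
neighbours of `v`. Call a set of copies deletable if it contains at most `θ = δ * r - s` elements
of each `A v`; the copies outside a deletable set form a total `s`-dominating function. Put each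
copy into a random set independently with probability `q`, and then take one element out of each
`(θ + 1)`-subset of an `A v` that the random set contains. This leaves a deletable set of expected
size at least `q * r * n - n * C(δ * r, θ + 1) * q ^ (θ + 1)`. The bound comes from the `q` that
maximizes this expression.
-/

open MeasureTheory ProbabilityTheory
open scoped unitInterval

section Deletion

variable {α : Type*}

lemma setBernoulli_univ_real_superset (p : I) (e : Finset α) :
    setBer(Set.univ, p).real {S : Set α | ↑e ⊆ S} = (p : ℝ) ^ #e := by
  have h_cylinder : (fun P : α → Prop ↦ {i | P i}) ⁻¹' {S : Set α | ↑e ⊆ S} =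
      Set.pi e fun _ ↦ {True} := by
    ext P
    simp [Set.subset_def]
  rw [measureReal_def, setBernoulli_apply', h_cylinder, Measure.infinitePi_pi _ (by simp)]
  simp

lemma exists_card_sub_card_filter_subset_ge [Fintype α] [DecidableEq α] (p : I)
    (E : Finset (Finset α)) :
    ∃ S : Finset α, (p : ℝ) * Fintype.card α - ∑ e ∈ E, (p : ℝ) ^ #e ≤ #S - #{e ∈ E | e ⊆ S} := by
  classical
  let X : Finset α → Set α → ℝ := fun e ↦ {S : Set α | ↑e ⊆ S}.indicator 1
  have integral_X (e : Finset α) : ∫ S, X e S ∂setBer(Set.univ, p) = (p : ℝ) ^ #e := by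
    rw [integral_indicator_one .of_discrete, setBernoulli_univ_real_superset]
  obtain ⟨S, hS⟩ := exists_integral_le (μ := setBer(Set.univ, p))
    (f := fun S ↦ ∑ i, X {i} S - ∑ e ∈ E, X e S) .of_finite
  refine ⟨S.toFinset, ?_⟩
  rw [integral_sub .of_finite .of_finite, integral_finsetSum _ fun _ _ ↦ .of_finite,
    integral_finsetSum _ fun _ _ ↦ .of_finite] at hS
  simp only [integral_X] at hS
  simpa [X, Set.indicator_apply, mul_comm] using hS

lemma exists_subset_card_le_add_card_filter_subset [DecidableEq α] {E : Finset (Finset α)}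
    (hE : ∅ ∉ E) (S : Finset α) :
    ∃ T ⊆ S, (∀ e ∈ E, ¬ e ⊆ T) ∧ #S ≤ #T + #{e ∈ E | e ⊆ S} := by
  set F : Finset (Finset α) := {e ∈ E | e ⊆ S}
  have h_nonempty (e : F) : e.1.Nonempty :=
    nonempty_iff_ne_empty.2 fun h ↦ hE (h ▸ (mem_filter.1 e.2).1)
  choose x hx using h_nonempty
  refine ⟨S \ univ.image x, sdiff_subset, fun e he heT ↦ ?_, ?_⟩
  · let e' : F := ⟨e, mem_filter.2 ⟨he, heT.trans sdiff_subset⟩⟩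
    exact (mem_sdiff.1 (heT (hx e'))).2 (mem_image_of_mem x (mem_univ e'))
  · have h_image : #(univ.image x) ≤ #F := by
      simpa only [card_univ, Fintype.card_coe] using card_image_le (s := univ) (f := x)
    have := le_card_sdiff (univ.image x) S
    lia

lemma exists_forall_not_subset_card_ge [Fintype α] (p : I) {E : Finset (Finset α)} (hE : ∅ ∉ E) :
    ∃ S : Finset α, (∀ e ∈ E, ¬ e ⊆ S) ∧
      (p : ℝ) * Fintype.card α - ∑ e ∈ E, (p : ℝ) ^ #e ≤ #S := by
  classical
  obtain ⟨S, hS⟩ := exists_card_sub_card_filter_subset_ge p E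
  obtain ⟨T, -, hET, hST⟩ := exists_subset_card_le_add_card_filter_subset hE S
  have hST' : (#S : ℝ) ≤ #T + #{e ∈ E | e ⊆ S} := mod_cast hST
  exact ⟨T, hET, by linarith⟩

lemma exists_forall_card_inter_le_card_ge [Fintype α] [DecidableEq α] {ι : Type*} [Fintype ι]
    (p : I) {A : ι → Finset α} {m : ℕ} (hA : ∀ i, #(A i) ≤ m) (k : ℕ) :
    ∃ S : Finset α, (∀ i, #(A i ∩ S) ≤ k) ∧
      (p : ℝ) * Fintype.card α - Fintype.card ι * m.choose (k + 1) * (p : ℝ) ^ (k + 1) ≤ #S := by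
  let E : Finset (Finset α) := univ.biUnion fun i ↦ (A i).powersetCard (k + 1)
  have card_of_mem {e : Finset α} (he : e ∈ E) : #e = k + 1 := by
    obtain ⟨i, -, hi⟩ := mem_biUnion.1 he
    exact (mem_powersetCard.1 hi).2
  have card_E : #E ≤ Fintype.card ι * m.choose (k + 1) :=
    card_biUnion_le_card_mul _ _ _ fun i _ ↦ by
      rw [card_powersetCard]
      exact Nat.choose_le_choose _ (hA i)
  have h_empty : ∅ ∉ E := fun h ↦ (Nat.succ_ne_zero k) (card_of_mem h).symm
  obtain ⟨S, hES, hS⟩ := exists_forall_not_subset_card_ge p h_empty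
  refine ⟨S, fun i ↦ ?_, ?_⟩
  · by_contra! hlt
    obtain ⟨e, he, hek⟩ := exists_subset_card_eq (Nat.succ_le_of_lt hlt)
    obtain ⟨heA, heS⟩ := subset_inter_iff.1 he
    exact hES e (mem_biUnion.2 ⟨i, mem_univ i, mem_powersetCard.2 ⟨heA, hek⟩⟩) heS
  · calc (p : ℝ) * Fintype.card α - Fintype.card ι * m.choose (k + 1) * (p : ℝ) ^ (k + 1)
        ≤ p * Fintype.card α - #E * (p : ℝ) ^ (k + 1) := by
          have hp := p.2.1
          gcongr
          exact_mod_cast card_E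
      _ = p * Fintype.card α - ∑ e ∈ E, (p : ℝ) ^ #e := by
          rw [sum_congr rfl fun e he ↦ by rw [card_of_mem he], sum_const, nsmul_eq_mul]
      _ ≤ #S := hS

end Deletion

section Domination

variable {V : Type*} [Fintype V] [DecidableEq V] (G : SimpleGraph V) [DecidableRel G.Adj]
  {rf sf : V → ℕ} {r : ℕ}

lemma totalRsDomNum_le_card (hrf : ∀ v, r ≤ rf v) {D : Finset (V × Fin r)}
    (hD : ∀ v, sf v ≤ #{x ∈ D | x.1 ∈ G.neighborFinset v}) : totalRsDomNum G rf sf ≤ #D := by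
  let f : V → ℕ := fun v ↦ #{x ∈ D | x.1 = v}
  have sum_f (T : Finset V) : ∑ u ∈ T, f u = #{x ∈ D | x.1 ∈ T} :=
    sum_card_fiberwise_eq_card_filter D T Prod.fst
  have f_le (v : V) : f v ≤ r := by
    have h_copies : {x ∈ D | x.1 = v} ⊆ {v} ×ˢ (univ : Finset (Fin r)) := fun x hx ↦ by
      exact mem_product.2 ⟨mem_singleton.2 (mem_filter.1 hx).2, mem_univ x.2⟩
    simpa using card_le_card h_copies
  exact Nat.sInf_le ⟨f, fun v ↦ (f_le v).trans (hrf v), fun v ↦ sum_f _ ▸ hD v, by simp [sum_f]⟩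

lemma totalRsDomNum_le_sub_choose_mul_pow {δ s t : ℕ} (hδ : ∀ v, δ ≤ G.degree v)
    (hrf : ∀ v, r ≤ rf v) (hsf : ∀ v, sf v ≤ s) (ht : δ * r = s + t) (q : I) :
    (totalRsDomNum G rf sf : ℝ) ≤
      (r - (r * q - (δ * r).choose (t + 1) * (q : ℝ) ^ (t + 1))) * Fintype.card V := by
  have h_copies (v : V) : ∃ A ⊆ G.neighborFinset v ×ˢ (univ : Finset (Fin r)), #A = δ * r :=
    exists_subset_card_eq <| by
      rw [card_product, card_univ, Fintype.card_fin, G.card_neighborFinset_eq_degree]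
      exact Nat.mul_le_mul_right r (hδ v)
  choose A hA_subset hA_card using h_copies
  obtain ⟨S, hAS, hS⟩ := exists_forall_card_inter_le_card_ge q (fun v ↦ (hA_card v).le) t
  have h_dom : totalRsDomNum G rf sf ≤ #Sᶜ := totalRsDomNum_le_card G hrf fun v ↦ by
    have h_remaining : A v \ S ⊆ {x ∈ Sᶜ | x.1 ∈ G.neighborFinset v} := fun x hx ↦ by
      obtain ⟨hxA, hxS⟩ := mem_sdiff.1 hx
      exact mem_filter.2 ⟨mem_compl.2 hxS, (mem_product.1 (hA_subset v hxA)).1⟩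
    calc sf v ≤ s := hsf v
      _ ≤ #(A v \ S) := by
        have := card_sdiff_add_card_inter (A v) S
        have := hAS v
        have := hA_card v
        lia
      _ ≤ _ := card_le_card h_remaining
  have h_compl : (#Sᶜ : ℝ) = Fintype.card V * r - #S := by
    rw [card_compl, Nat.cast_sub (card_le_univ S)]
    simp
  rw [Fintype.card_prod, Fintype.card_fin, Nat.cast_mul] at hS
  calc (totalRsDomNum G rf sf : ℝ) ≤ Fintype.card V * r - #S := h_compl ▸ mod_cast h_dom
    _ ≤ _ := by linarith

end Domination

lemma le_sub_mul_choose {n k : ℕ} (hk : k < n) : n ≤ (n - k) * n.choose k := by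
  obtain ⟨m, rfl⟩ := Nat.exists_eq_add_one_of_ne_zero (Nat.ne_zero_of_lt hk)
  calc m + 1 ≤ m.choose k * (m + 1) :=
        Nat.le_mul_of_pos_left _ (Nat.choose_pos (Nat.le_of_lt_succ hk))
    _ = (m + 1 - k) * (m + 1).choose k := by rw [Nat.choose_mul_succ_eq, mul_comm]

-- Equality holds for `0 < s`; at `s = 0` truncated subtraction turns the claim into `0 ≤ 1`.
lemma choose_add_one_le_choose_sub_one (s t : ℕ) :
    (s + t).choose (t + 1) ≤ (s + t).choose (s - 1) := by
  obtain rfl | hs := Nat.eq_zero_or_pos s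
  · rw [Nat.choose_eq_zero_of_lt (by lia)]
    exact Nat.zero_le _
  · exact (Nat.choose_symm_of_eq_add (by lia)).le

/-- `q = (a * ρ / ((1 + ρ) * B)) ^ ρ` is the maximizer of `a * q - B * q ^ (θ + 1)` over `0 ≤ q`. -/
lemma exists_unitInterval_mul_sub_mul_rpow_eq {a B θ ρ : ℝ} (ha : 0 ≤ a) (hB : 0 < B) (hθ : 0 < θ)
    (hρ : ρ = 1 / θ) (haB : a ≤ (θ + 1) * B) :
    ∃ q : I, a * q - B * (q : ℝ) ^ (θ + 1) =
      (a * ρ) ^ ρ / ((1 + ρ) ^ (1 + ρ) * B ^ ρ) * a := by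
  have hρ0 : 0 < ρ := hρ ▸ one_div_pos.2 hθ
  have hρθ : ρ * θ = 1 := by rw [hρ, one_div_mul_cancel hθ.ne']
  set b : ℝ := a * ρ / ((1 + ρ) * B) with hb
  have hb0 : 0 ≤ b := by positivity
  have hb1 : b ≤ 1 := by
    rw [hb, div_le_one (by positivity)]
    calc a * ρ ≤ (θ + 1) * B * ρ := by gcongr
      _ = (ρ * θ + ρ) * B := by ring
      _ = (1 + ρ) * B := by rw [hρθ]
  refine ⟨⟨b ^ ρ, rpow_nonneg hb0 ρ, rpow_le_one hb0 hb1 hρ0.le⟩, ?_⟩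
  calc a * b ^ ρ - B * (b ^ ρ) ^ (θ + 1)
      = a * b ^ ρ - B * (b * b ^ ρ) := by
        rw [rpow_add_one' (rpow_nonneg hb0 ρ) (by positivity), ← rpow_mul hb0, hρθ, rpow_one]
    _ = b ^ ρ / (1 + ρ) * a := by
        rw [hb]
        field_simp
        ring
    _ = (a * ρ) ^ ρ / ((1 + ρ) ^ (1 + ρ) * B ^ ρ) * a := by
        rw [hb, div_rpow (by positivity) (by positivity), mul_rpow (by positivity) hB.le,
          rpow_add (by positivity), rpow_one]
        field_simp

theorem total_rs_domination_bound_general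
    {V : Type*} [Fintype V] [DecidableEq V] (G : SimpleGraph V) [DecidableRel G.Adj]
    {rf sf : V → ℕ} {δ r s : ℕ} (hδ : ∀ v, δ ≤ G.degree v) (hrf : ∀ v, r ≤ rf v)
    (hsf : ∀ v, sf v ≤ s) (hsr : s < δ * r)
    {θ ρ B : ℝ} (hθ : θ = (δ : ℝ) * r - s) (hρ : ρ = 1 / θ)
    (hB : B = ((δ * r).choose (s - 1) : ℕ)) :
    (totalRsDomNum G rf sf : ℝ) ≤
      (1 - ((r : ℝ) * ρ) ^ ρ / ((1 + ρ) ^ (1 + ρ) * B ^ ρ)) * ((r : ℝ) * Fintype.card V) := by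
  obtain ⟨t, ht⟩ := exists_add_of_le hsr.le
  have hθt : θ = t := by rw [hθ, ← Nat.cast_mul, ht, Nat.cast_add, add_sub_cancel_left]
  have hθ0 : 0 < θ := by rw [hθt, Nat.cast_pos]; lia
  have hB0 : 0 < B := by rw [hB, Nat.cast_pos]; exact Nat.choose_pos (by lia)
  have h_choose : ((δ * r).choose (t + 1) : ℝ) ≤ B := by
    rw [hB, ht, Nat.cast_le]
    exact choose_add_one_le_choose_sub_one s t
  have hrB : (r : ℝ) ≤ (θ + 1) * B := by
    rw [hθt, hB]
    norm_cast
    calc r ≤ δ * r := Nat.le_mul_of_pos_left r (Nat.pos_of_mul_pos_right hsr.pos)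
      _ ≤ (δ * r - (s - 1)) * (δ * r).choose (s - 1) := le_sub_mul_choose (by lia)
      _ ≤ (t + 1) * (δ * r).choose (s - 1) := Nat.mul_le_mul_right _ (by lia)
  obtain ⟨q, hq⟩ := exists_unitInterval_mul_sub_mul_rpow_eq r.cast_nonneg hB0 hθ0 hρ hrB
  have hq0 : 0 ≤ (q : ℝ) := q.2.1
  calc (totalRsDomNum G rf sf : ℝ)
      ≤ (r - (r * q - (δ * r).choose (t + 1) * (q : ℝ) ^ (t + 1))) * Fintype.card V :=
        totalRsDomNum_le_sub_choose_mul_pow G hδ hrf hsf ht q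
    _ ≤ (r - (r * q - B * (q : ℝ) ^ (t + 1))) * Fintype.card V := by gcongr
    _ = (r - (r * q - B * (q : ℝ) ^ (θ + 1))) * Fintype.card V := by
        rw [hθt, ← Nat.cast_add_one, rpow_natCast]
    _ = _ := by
        rw [hq]
        ring

theorem total_rs_domination_bound
    {V : Type*} [Fintype V] [DecidableEq V] [Nonempty V]
    (G : SimpleGraph V) [DecidableRel G.Adj]
    (n : ℕ) (hn : n = Fintype.card V)
    (δ : ℕ) (hδ : δ = G.minDegree)
    (hδ0 : 0 < δ)
    (rf sf : V → ℕ)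
    (s : ℕ) (hs : s = Finset.univ.sup sf)
    (r : ℕ) (hr : r = s / δ + 1)
    (hrτ : r ≤ Finset.univ.inf' Finset.univ_nonempty rf)
    (θ : ℝ) (hθ : θ = (δ : ℝ) * r - s)
    (ρ : ℝ) (hρ : ρ = 1 / θ)
    (B : ℝ) (hB : B = ((δ * r).choose (s - 1) : ℕ)) :
    (totalRsDomNum G rf sf : ℝ) ≤
      (1 - ((r : ℝ) * ρ) ^ ρ / ((1 + ρ) ^ (1 + ρ) * B ^ ρ)) * ((r : ℝ) * n) := by
  subst hn hδ hs
  exact total_rs_domination_bound_general G G.minDegree_le_degree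
    (fun v ↦ hrτ.trans (inf'_le rf (mem_univ v))) (fun v ↦ le_sup (mem_univ v))
    (hr ▸ Nat.lt_mul_div_succ _ hδ0) hθ hρ hB
end

section
/- For any finite simple graph G of order n with minimum degree δ > 0, if r̃ := ⌊s/δ⌋ + 1 satisfies r̃ ≤ τ, then with θ̃ = δ·r̃ − s and B̃_{s−1} = C(δ·r̃, s−1), the total ⟨r,s⟩-domination number satisfies γᵗ⟨r,s⟩(G) ≤ ((ln(θ̃+1) + ln B̃_{s−1} − ln r̃ + 1)/(θ̃+1)) · r̃·n. -/
open Finset Real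

/-
Give each vertex `v` a set of `r` tokens, pick every token independently with probability `p`, and
let `f v` be the number of tokens of `v` picked. Fix `δr` of the tokens of a neighbourhood. If it
falls short of its demand `s` by `j > 0`, then at least `j` of the `(δr - s + 1)`-subsets of these
tokens are entirely unpicked, so its expected shortfall is at most
`C(δr, s - 1) (1 - p)^(δr - s + 1)`. Some outcome does no worse than the average, and topping it up
costs at most its total shortfall. The bound follows by choosing `p = min 1 (ln(kB / r) / k)` with
`k = δr - s + 1` and `B = C(δr, s - 1)`.
-/

theorem tsub_le_choose_add_one (n k : ℕ) : n - k ≤ n.choose (k + 1) := by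
  induction n with
  | zero => simp
  | succ n ih =>
    rw [Nat.choose_succ_succ']
    rcases lt_or_ge n k with hnk | hkn
    · omega
    · have := Nat.choose_pos hkn
      omega

theorem le_tsub_add_one_mul_choose {m s : ℕ} (hs : s ≤ m) :
    m ≤ (m - s + 1) * m.choose (s - 1) := by
  rcases s with _ | t
  · simp
  · obtain ⟨l, rfl⟩ : ∃ l, m = l + 1 := ⟨m - 1, by omega⟩
    calc l + 1 ≤ (l + 1) * l.choose t := Nat.le_mul_of_pos_right _ (Nat.choose_pos (by omega))
      _ = (l + 1).choose t * (l + 1 - t) := by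
        rw [Nat.add_one_mul_choose_eq, Nat.choose_succ_right_eq]
      _ = (l + 1 - (t + 1) + 1) * (l + 1).choose (t + 1 - 1) := by
        rw [mul_comm, Nat.add_sub_cancel, show l + 1 - (t + 1) + 1 = l + 1 - t by omega]

theorem exists_add_mul_one_sub_pow_le {k : ℕ} {c : ℝ} (hkc : 1 ≤ k * c) :
    ∃ p : ℝ, 0 ≤ p ∧ p ≤ 1 ∧ p + c * (1 - p) ^ k ≤ (log (k * c) + 1) / k := by
  have hk : k ≠ 0 := by rintro rfl; norm_num at hkc
  have hk' : (0 : ℝ) < k := by positivity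
  have hlog : 0 ≤ log (k * c) := log_nonneg hkc
  have hc : 0 < c := pos_of_mul_pos_right (zero_lt_one.trans_le hkc) hk'.le
  rcases le_or_gt (log (k * c) / k) 1 with hp1 | hp1
  · refine ⟨log (k * c) / k, by positivity, hp1, ?_⟩
    have hpow : (1 - log (k * c) / k) ^ k ≤ (k * c)⁻¹ :=
      calc (1 - log (k * c) / k) ^ k ≤ exp (-log (k * c)) :=
            one_sub_div_pow_le_exp_neg ((div_le_one hk').mp hp1)
        _ = (k * c)⁻¹ := by rw [exp_neg, exp_log (by positivity)]
    calc log (k * c) / k + c * (1 - log (k * c) / k) ^ k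
        ≤ log (k * c) / k + c * (k * c)⁻¹ := by gcongr
      _ = (log (k * c) + 1) / k := by field_simp
  · refine ⟨1, zero_le_one, le_rfl, ?_⟩
    rw [sub_self, zero_pow hk, mul_zero, add_zero, add_div]
    exact hp1.le.trans (le_add_of_nonneg_right (by positivity))

theorem tsub_card_inter_le_card_filter_disjoint {E : Type*} [DecidableEq E] {S T : Finset E}
    {s : ℕ} (hs : s ≤ #T) :
    s - #(S ∩ T) ≤ #{U ∈ T.powersetCard (#T - s + 1) | Disjoint U S} := by
  have hsdiff : {U ∈ T.powersetCard (#T - s + 1) | Disjoint U S} =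
      (T \ S).powersetCard (#T - s + 1) := by
    ext U
    simp only [mem_filter, mem_powersetCard, subset_sdiff]
    tauto
  have hcard : #(T \ S) + #(S ∩ T) = #T := by
    rw [inter_comm]
    exact card_sdiff_add_card_inter T S
  calc s - #(S ∩ T) = #(T \ S) - (#T - s) := by omega
    _ ≤ (#(T \ S)).choose (#T - s + 1) := tsub_le_choose_add_one _ _
    _ = #{U ∈ T.powersetCard (#T - s + 1) | Disjoint U S} := by rw [hsdiff, card_powersetCard]

section RandomSubset

variable {E : Type*} [Fintype E] [DecidableEq E]

/-- The probability of the outcome `S` when each element of `E` is selected independently with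
probability `p`. Expectations over this random subset are written as weighted sums over all
`S : Finset E`. -/
noncomputable def bernoulliWeight (p : ℝ) (S : Finset E) : ℝ :=
  p ^ #S * (1 - p) ^ #Sᶜ

theorem bernoulliWeight_nonneg {p : ℝ} (hp0 : 0 ≤ p) (hp1 : p ≤ 1) (S : Finset E) :
    0 ≤ bernoulliWeight p S :=
  mul_nonneg (pow_nonneg hp0 _) (pow_nonneg (sub_nonneg.mpr hp1) _)

theorem sum_bernoulliWeight_of_disjoint (p : ℝ) (U : Finset E) :
    ∑ S with Disjoint U S, bernoulliWeight p S = (1 - p) ^ #U := by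
  have hfilter : ({S | Disjoint U S} : Finset (Finset E)) = Uᶜ.powerset := by
    ext S
    simp [← le_compl_iff_disjoint_left]
  have hweight : ∀ S ∈ Uᶜ.powerset,
      bernoulliWeight p S = (1 - p) ^ #U * (p ^ #S * (1 - p) ^ (#Uᶜ - #S)) := by
    intro S hS
    have hcard : #Sᶜ = #U + (#Uᶜ - #S) := by
      have := card_le_card (mem_powerset.mp hS)
      have := card_add_card_compl U
      have := card_add_card_compl S
      omega
    rw [bernoulliWeight, hcard]
    ring
  rw [hfilter, sum_congr rfl hweight, ← mul_sum, sum_pow_mul_eq_add_pow]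
  simp

theorem sum_bernoulliWeight (p : ℝ) : ∑ S : Finset E, bernoulliWeight p S = 1 := by
  simpa using sum_bernoulliWeight_of_disjoint p (∅ : Finset E)

theorem sum_bernoulliWeight_of_mem (p : ℝ) (e : E) :
    ∑ S with e ∈ S, bernoulliWeight p S = p := by
  have hsplit := sum_filter_add_sum_filter_not univ (fun S : Finset E => e ∈ S) (bernoulliWeight p)
  have havoid := sum_bernoulliWeight_of_disjoint p {e}
  simp only [disjoint_singleton_left, card_singleton, pow_one] at havoid
  rw [havoid, sum_bernoulliWeight] at hsplit
  linarith

theorem sum_bernoulliWeight_mul_card (p : ℝ) :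
    ∑ S : Finset E, bernoulliWeight p S * #S = p * Fintype.card E := by
  calc ∑ S : Finset E, bernoulliWeight p S * #S
      = ∑ S : Finset E, ∑ e : E, if e ∈ S then bernoulliWeight p S else 0 := by
        simp [mul_comm]
    _ = ∑ e : E, ∑ S with e ∈ S, bernoulliWeight p S := by
        simp only [sum_comm (γ := Finset E), sum_filter]
    _ = p * Fintype.card E := by
        simp [sum_bernoulliWeight_of_mem, mul_comm]

theorem exists_le_sum_bernoulliWeight_mul {p : ℝ} (hp0 : 0 ≤ p) (hp1 : p ≤ 1)
    (X : Finset E → ℝ) : ∃ S, X S ≤ ∑ S', bernoulliWeight p S' * X S' := by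
  obtain ⟨S, -, hS⟩ := exists_min_image univ X univ_nonempty
  refine ⟨S, ?_⟩
  calc X S = ∑ S', bernoulliWeight p S' * X S := by rw [← sum_mul, sum_bernoulliWeight, one_mul]
    _ ≤ ∑ S', bernoulliWeight p S' * X S' :=
      sum_le_sum fun S' hS' =>
        mul_le_mul_of_nonneg_left (hS S' hS') (bernoulliWeight_nonneg hp0 hp1 S')

theorem sum_bernoulliWeight_mul_tsub_card_inter_le {p : ℝ} (hp0 : 0 ≤ p) (hp1 : p ≤ 1)
    {T : Finset E} {m s : ℕ} (hs : s ≤ m) (hm : m ≤ #T) :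
    ∑ S, bernoulliWeight p S * ((s - #(S ∩ T) : ℕ) : ℝ) ≤
      m.choose (s - 1) * (1 - p) ^ (m - s + 1) := by
  obtain ⟨T', hT', rfl⟩ := exists_subset_card_eq hm
  set k := #T' - s + 1 with hk
  have hpointwise (S : Finset E) :
      s - #(S ∩ T) ≤ #{U ∈ T'.powersetCard k | Disjoint U S} :=
    calc s - #(S ∩ T) ≤ s - #(S ∩ T') := by gcongr
      _ ≤ _ := tsub_card_inter_le_card_filter_disjoint hs
  have hchoose : (#T').choose k ≤ (#T').choose (s - 1) := by
    rcases s with _ | t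
    · simp [hk]
    · rw [← Nat.choose_symm (by omega : k ≤ #T'), show #T' - k = t + 1 - 1 by omega]
  have : 0 ≤ 1 - p := sub_nonneg.mpr hp1
  calc ∑ S, bernoulliWeight p S * ((s - #(S ∩ T) : ℕ) : ℝ)
      ≤ ∑ S, bernoulliWeight p S * (#{U ∈ T'.powersetCard k | Disjoint U S} : ℝ) := by
        gcongr with S
        · exact bernoulliWeight_nonneg hp0 hp1 S
        · exact hpointwise S
    _ = ∑ U ∈ T'.powersetCard k, ∑ S with Disjoint U S, bernoulliWeight p S := by
        simp only [card_filter, sum_filter, Nat.cast_sum, Nat.cast_ite, Nat.cast_one,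
          Nat.cast_zero, mul_sum, mul_ite, mul_one, mul_zero]
        exact sum_comm
    _ = ∑ U ∈ T'.powersetCard k, (1 - p) ^ k :=
        sum_congr rfl fun U hU => by
          rw [sum_bernoulliWeight_of_disjoint, (mem_powersetCard.mp hU).2]
    _ = (#T').choose k * (1 - p) ^ k := by
        rw [sum_const, card_powersetCard, nsmul_eq_mul]
    _ ≤ (#T').choose (s - 1) * (1 - p) ^ k := by gcongr

theorem exists_card_add_sum_tsub_card_inter_le {ι : Type*} [Fintype ι] {p : ℝ} (hp0 : 0 ≤ p)
    (hp1 : p ≤ 1) {T : ι → Finset E} {m s : ℕ} (hs : s ≤ m) (hm : ∀ i, m ≤ #(T i)) :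
    ∃ S : Finset E, ((#S + ∑ i, (s - #(S ∩ T i)) : ℕ) : ℝ) ≤
      p * Fintype.card E + Fintype.card ι * (m.choose (s - 1) * (1 - p) ^ (m - s + 1)) := by
  obtain ⟨S, hS⟩ := exists_le_sum_bernoulliWeight_mul hp0 hp1
    fun S : Finset E => ((#S + ∑ i, (s - #(S ∩ T i)) : ℕ) : ℝ)
  refine ⟨S, hS.trans ?_⟩
  calc ∑ S, bernoulliWeight p S * ((#S + ∑ i, (s - #(S ∩ T i)) : ℕ) : ℝ)
      = ∑ S : Finset E, bernoulliWeight p S * #S +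
          ∑ i, ∑ S, bernoulliWeight p S * ((s - #(S ∩ T i) : ℕ) : ℝ) := by
        simp only [Nat.cast_add, Nat.cast_sum, mul_add, sum_add_distrib, mul_sum]
        rw [sum_comm (γ := ι)]
    _ ≤ p * Fintype.card E + ∑ _i : ι, m.choose (s - 1) * (1 - p) ^ (m - s + 1) := by
        rw [sum_bernoulliWeight_mul_card]
        gcongr with i
        exact sum_bernoulliWeight_mul_tsub_card_inter_le hp0 hp1 hs (hm i)
    _ = _ := by rw [sum_const, card_univ, nsmul_eq_mul]

end RandomSubset

section Deficit

variable {ι V : Type*} [Fintype ι]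

/-- The total amount by which `f` fails to give each set `N i` the weight `d i`. The subtraction
is truncated, so that a surplus on one set does not offset a shortfall on another. -/
def deficit (N : ι → Finset V) (d : ι → ℕ) (f : V → ℕ) : ℕ :=
  ∑ i, (d i - ∑ u ∈ N i, f u)

theorem deficit_mono_left (N : ι → Finset V) {d d' : ι → ℕ} (hd : d ≤ d') (f : V → ℕ) :
    deficit N d f ≤ deficit N d' f :=
  sum_le_sum fun i _ => Nat.sub_le_sub_right (hd i) _

theorem deficit_add_single_lt [DecidableEq V] {N : ι → Finset V} {d : ι → ℕ} {f : V → ℕ} {i : ι}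
    {u : V} (hi : ∑ w ∈ N i, f w < d i) (hu : u ∈ N i) :
    deficit N d (f + Pi.single u 1) < deficit N d f := by
  have hsum (j : ι) :
      ∑ w ∈ N j, (f + Pi.single u 1 : V → ℕ) w = ∑ w ∈ N j, f w + if u ∈ N j then 1 else 0 := by
    simp [sum_add_distrib, sum_pi_single']
  refine sum_lt_sum (fun j _ => ?_) ⟨i, mem_univ i, ?_⟩
  · rw [hsum]
    omega
  · rw [hsum, if_pos hu]
    omega

theorem exists_dominating_sum_le_add_deficit [Fintype V] {N : ι → Finset V} {d : ι → ℕ} {r : V → ℕ}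
    (hr : ∀ i, d i ≤ ∑ u ∈ N i, r u) {f : V → ℕ} (hf : f ≤ r) :
    ∃ g ≤ r, (∀ i, d i ≤ ∑ u ∈ N i, g u) ∧ ∑ v, g v ≤ ∑ v, f v + deficit N d f := by
  classical
  induction hD : deficit N d f using Nat.strong_induction_on generalizing f with
  | _ D ih =>
    by_cases hdom : ∀ i, d i ≤ ∑ u ∈ N i, f u
    · exact ⟨f, hf, hdom, Nat.le_add_right _ _⟩
    push Not at hdom
    obtain ⟨i, hi⟩ := hdom
    obtain ⟨u, hu, hur⟩ : ∃ u ∈ N i, f u < r u := exists_lt_of_sum_lt (hi.trans_le (hr i))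
    have hf' : f + Pi.single u 1 ≤ r := by
      intro w
      by_cases hw : w = u
      · subst hw
        simpa using hur
      · simpa [hw] using hf w
    have hweight : ∑ v, (f + Pi.single u 1 : V → ℕ) v = ∑ v, f v + 1 := by
      simp [sum_add_distrib, sum_pi_single']
    have hlt := deficit_add_single_lt hi hu
    obtain ⟨g, hgr, hgd, hg⟩ := ih _ (hD ▸ hlt) hf' rfl
    exact ⟨g, hgr, hgd, by omega⟩

theorem card_inter_product_univ {α : Type*} [Fintype α] [DecidableEq V] [DecidableEq α]
    (S : Finset (V × α)) (X : Finset V) :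
    #(S ∩ X ×ˢ univ) = ∑ v ∈ X, #{a | (v, a) ∈ S} := by
  rw [inter_comm, ← filter_mem_eq_inter]
  simp only [card_filter, sum_product]

theorem exists_le_sum_add_deficit_le [Fintype V] {p : ℝ} (hp0 : 0 ≤ p) (hp1 : p ≤ 1)
    {N : ι → Finset V} {δ r s : ℕ} (hN : ∀ i, δ ≤ #(N i)) (hs : s ≤ δ * r) :
    ∃ f : V → ℕ, (∀ v, f v ≤ r) ∧ ((∑ v, f v + deficit N (fun _ => s) f : ℕ) : ℝ) ≤
      p * (r * Fintype.card V) +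
        Fintype.card ι * ((δ * r).choose (s - 1) * (1 - p) ^ (δ * r - s + 1)) := by
  classical
  have htokens (i : ι) : δ * r ≤ #(N i ×ˢ (univ : Finset (Fin r))) := by
    rw [card_product, card_univ, Fintype.card_fin]
    exact Nat.mul_le_mul_right r (hN i)
  obtain ⟨S, hS⟩ := exists_card_add_sum_tsub_card_inter_le hp0 hp1 hs htokens
  refine ⟨fun v => #{a | (v, a) ∈ S}, fun v => ?_, ?_⟩
  · simpa using card_le_univ ({a | (v, a) ∈ S} : Finset (Fin r))
  · have hweight : ∑ v, #{a | (v, a) ∈ S} = #S := by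
      rw [← card_inter_product_univ, univ_product_univ, inter_univ]
    simp only [deficit, hweight, ← card_inter_product_univ]
    rwa [Fintype.card_prod, Fintype.card_fin, Nat.cast_mul, mul_comm (Fintype.card V : ℝ)] at hS

end Deficit

section Domination

variable {V : Type*} [Fintype V] [DecidableEq V] (G : SimpleGraph V) [DecidableRel G.Adj]
  {rf sf : V → ℕ}

theorem totalRsDomNum_le_sum_add_deficit (hrf : ∀ v, sf v ≤ ∑ u ∈ G.neighborFinset v, rf u)
    {f : V → ℕ} (hf : f ≤ rf) :
    totalRsDomNum G rf sf ≤ ∑ v, f v + deficit (fun v => G.neighborFinset v) sf f := by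
  obtain ⟨g, hgr, hgs, hg⟩ := exists_dominating_sum_le_add_deficit hrf hf
  have hle : totalRsDomNum G rf sf ≤ ∑ v, g v := Nat.sInf_le ⟨g, hgr, hgs, rfl⟩
  exact hle.trans hg

theorem totalRsDomNum_le_of_prob {p : ℝ} (hp0 : 0 ≤ p) (hp1 : p ≤ 1) {δ r s : ℕ}
    (hδ : ∀ v, δ ≤ G.degree v) (hsf : ∀ v, sf v ≤ s) (hrf : ∀ v, r ≤ rf v) (hs : s ≤ δ * r) :
    (totalRsDomNum G rf sf : ℝ) ≤ p * (r * Fintype.card V) +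
      Fintype.card V * ((δ * r).choose (s - 1) * (1 - p) ^ (δ * r - s + 1)) := by
  have hcapacity (v : V) : sf v ≤ ∑ u ∈ G.neighborFinset v, rf u :=
    calc sf v ≤ G.degree v * r := (hsf v).trans (hs.trans (Nat.mul_le_mul_right r (hδ v)))
      _ ≤ ∑ u ∈ G.neighborFinset v, rf u := card_nsmul_le_sum _ _ _ fun u _ => hrf u
  obtain ⟨f, hfr, hf⟩ :=
    exists_le_sum_add_deficit_le (N := fun v => G.neighborFinset v) hp0 hp1 hδ hs
  refine le_trans (Nat.cast_le.mpr ?_) hf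
  calc totalRsDomNum G rf sf ≤ ∑ v, f v + deficit (fun v => G.neighborFinset v) sf f :=
        totalRsDomNum_le_sum_add_deficit G hcapacity fun v => (hfr v).trans (hrf v)
    _ ≤ ∑ v, f v + deficit (fun v => G.neighborFinset v) (fun _ => s) f := by
        gcongr
        exact deficit_mono_left _ hsf f

theorem total_rs_domination_log_bound_general {δ r s : ℕ} (hδ0 : 0 < δ)
    (hδ : ∀ v, δ ≤ G.degree v) (hsf : ∀ v, sf v ≤ s) (hr : 0 < r) (hrf : ∀ v, r ≤ rf v)
    (hs : s ≤ δ * r) :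
    (totalRsDomNum G rf sf : ℝ) ≤
      (log ((δ : ℝ) * r - s + 1) + log ((δ * r).choose (s - 1)) - log r + 1) /
        ((δ : ℝ) * r - s + 1) * (r * Fintype.card V) := by
  have hk : (δ : ℝ) * r - s + 1 = ((δ * r - s + 1 : ℕ) : ℝ) := by push_cast [hs]; ring
  set k := δ * r - s + 1
  set B := (δ * r).choose (s - 1)
  have hr' : (0 : ℝ) < r := Nat.cast_pos.mpr hr
  have hk0 : (0 : ℝ) < k := Nat.cast_pos.mpr (Nat.succ_pos _)
  have hB : (0 : ℝ) < B := Nat.cast_pos.mpr (Nat.choose_pos (by omega))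
  have hkB : 1 ≤ k * (B / r : ℝ) := by
    rw [← mul_div_assoc, one_le_div hr']
    exact_mod_cast (Nat.le_mul_of_pos_left r hδ0).trans (le_tsub_add_one_mul_choose hs)
  obtain ⟨p, hp0, hp1, hp⟩ := exists_add_mul_one_sub_pow_le hkB
  calc (totalRsDomNum G rf sf : ℝ)
      ≤ p * (r * Fintype.card V) + Fintype.card V * (B * (1 - p) ^ k) :=
        totalRsDomNum_le_of_prob G hp0 hp1 hδ hsf hrf hs
    _ = (p + B / r * (1 - p) ^ k) * (r * Fintype.card V) := by field_simp
    _ ≤ (log (k * (B / r)) + 1) / k * (r * Fintype.card V) := by gcongr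
    _ = _ := by
        rw [hk, log_mul hk0.ne' (by positivity), log_div hB.ne' hr'.ne', add_sub_assoc]

end Domination

theorem total_rs_domination_log_bound
    {V : Type*} [Fintype V] [DecidableEq V] [Nonempty V]
    (G : SimpleGraph V) [DecidableRel G.Adj]
    (n : ℕ) (hn : n = Fintype.card V)
    (δ : ℕ) (hδ : δ = G.minDegree)
    (hδ0 : 0 < δ)
    (rf sf : V → ℕ)
    (s : ℕ) (hs : s = Finset.univ.sup sf)
    (r : ℕ) (hr : r = s / δ + 1)
    (hrτ : r ≤ Finset.univ.inf' Finset.univ_nonempty rf)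
    (θ : ℝ) (hθ : θ = (δ : ℝ) * r - s)
    (B : ℝ) (hB : B = ((δ * r).choose (s - 1) : ℕ)) :
    (totalRsDomNum G rf sf : ℝ) ≤
      ((Real.log (θ + 1) + Real.log B - Real.log r + 1) / (θ + 1)) * ((r : ℝ) * n) := by
  subst hn hδ hs hr hθ hB
  exact total_rs_domination_log_bound_general G hδ0 G.minDegree_le_degree
    (fun v => le_sup (mem_univ v)) (Nat.succ_pos _)
    (fun v => hrτ.trans (inf'_le _ (mem_univ v))) (Nat.lt_mul_div_succ _ hδ0).le
end
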